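/- Let 0 ≤ r < 1 and 0 < τ < φ(r). If s > 1 satisfies s²·(φ(r/s) − φ(1/s)) = φ(r) − τ, then s ≥ 1 + τ²/16 and consequently 1 − 1/s ≥ τ²/20. -/

import Mathlib

/-!
The derivative `φ'(x) = -2x²/√(1 - x²)` turns the equation for `s` into
`τ = ∫_r^1 2u² (1/√(1 - u²) - 1/√(s² - u²)) du`. Replacing `2u²` by `2` gives
`τ ≤ 2 (arccos r - arccos (r/s) + arccos (1/s)) ≤ 2 arccos (1/s)`; `tau_aux` proves the first of
these inequalities by monotonicity instead of integration. Since
`arccos (1/s) = arctan √(s² - 1) ≤ √(s² - 1)`, it follows that `τ² ≤ 4 (s - 1) (s + 1)`, which is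
at most `16 (s - 1)` when `s ≤ 3`. For `s > 3`, and for passing to `1 - 1/s`, the bound
`τ < φ r ≤ π / 2 < 2` is enough.
-/

noncomputable section

/-- The profile function `φ(r) = arccos r + r √(1 - r²)`. -/
def phi (r : ℝ) : ℝ := Real.arccos r + r * Real.sqrt (1 - r ^ 2)

lemma hasDerivAt_phi {x : ℝ} (h0 : -1 < x) (h1 : x < 1) :
    HasDerivAt phi (-(2 * x ^ 2) / √(1 - x ^ 2)) x := by
  have hpos : 0 < 1 - x ^ 2 := by nlinarith
  have hsq := Real.sq_sqrt hpos.le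
  have hs := Real.sqrt_pos.2 hpos
  have hq : HasDerivAt (fun y : ℝ => 1 - y ^ 2) (-(2 * x)) x := by
    simpa using (hasDerivAt_pow 2 x).const_sub 1
  have h : HasDerivAt phi _ x := (Real.hasDerivAt_arccos h0.ne' h1.ne).add
    ((hasDerivAt_id x).mul (hq.sqrt hpos.ne'))
  refine h.congr_deriv ?_
  simp only [id]
  field_simp
  linarith

lemma continuous_phi : Continuous phi := by
  unfold phi
  fun_prop

lemma phi_le {r : ℝ} (hr0 : 0 ≤ r) (hr1 : r ≤ 1) : phi r ≤ Real.pi / 2 := by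
  have h1 : r ≤ Real.arcsin r := by
    have := Real.sin_le (Real.arcsin_nonneg.2 hr0)
    rwa [Real.sin_arcsin (by linarith) hr1] at this
  have h2 : √(1 - r ^ 2) ≤ 1 := Real.sqrt_le_one.2 (by nlinarith)
  unfold phi
  rw [Real.arccos_eq_pi_div_two_sub_arcsin]
  nlinarith

lemma arccos_one_div_le {s : ℝ} (hs : 1 < s) : Real.arccos (1 / s) ≤ √(s ^ 2 - 1) := by
  have hs0 : 0 < s := by linarith
  rw [Real.arccos_eq_arctan (by positivity)]
  have e : √(1 - (1 / s) ^ 2) / (1 / s) = √(s ^ 2 - 1) := by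
    have : s ^ 2 - 1 = (1 - (1 / s) ^ 2) * s ^ 2 := by field_simp
    rw [this, Real.sqrt_mul' _ (by positivity), Real.sqrt_sq hs0.le]
    field_simp
  rw [e]
  have h := Real.le_tan (Real.arctan_nonneg.2 (Real.sqrt_nonneg (s ^ 2 - 1)))
    (Real.arctan_lt_pi_div_two _)
  rwa [Real.tan_arctan] at h

/-- The right side minus the left side vanishes at `r = 1` and has derivative
`-2 (1 - r²) (1/√(1 - r²) - 1/√(s² - r²)) ≤ 0` in `r`. -/
lemma tau_aux {r s : ℝ} (hr0 : 0 ≤ r) (hr1 : r ≤ 1) (hs : 1 < s) :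
    phi r - s ^ 2 * (phi (r / s) - phi (1 / s)) ≤
      2 * (Real.arccos r - Real.arccos (r / s) + Real.arccos (1 / s)) := by
  have hs0 : 0 < s := by linarith
  let H : ℝ → ℝ := fun x => 2 * (Real.arccos x - Real.arccos (x / s)) -
    (phi x - s ^ 2 * phi (x / s))
  have hanti : AntitoneOn H (Set.Icc 0 1) := by
    have hc := continuous_phi
    have hder : ∀ x ∈ interior (Set.Icc (0 : ℝ) 1), HasDerivAt H
        (-(2 * (1 - x ^ 2)) * (1 / √(1 - x ^ 2) - 1 / √(1 - (x / s) ^ 2) * (1 / s))) x := by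
      intro x hx
      rw [interior_Icc] at hx
      obtain ⟨hx0, hx1⟩ := hx
      have hxs0 : 0 < x / s := by positivity
      have hxs1 : x / s < 1 := (div_lt_one hs0).2 (by linarith)
      have hd : HasDerivAt (fun y : ℝ => y / s) (1 / s) x := (hasDerivAt_id x).div_const s
      have h1 := Real.hasDerivAt_arccos (by linarith : x ≠ -1) hx1.ne
      have h2 := (Real.hasDerivAt_arccos (by linarith : x / s ≠ -1) hxs1.ne).comp x hd
      have h3 := hasDerivAt_phi (by linarith : -1 < x) hx1
      have h4 := (hasDerivAt_phi (by linarith : -1 < x / s) hxs1).comp x hd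
      refine (((h1.sub h2).const_mul 2).sub (h3.sub (h4.const_mul (s ^ 2)))).congr_deriv ?_
      have e : s ^ 2 * (x / s) ^ 2 = x ^ 2 := by field_simp
      linear_combination (-2 / √(1 - (x / s) ^ 2) * (1 / s)) * e
    refine antitoneOn_of_deriv_nonpos (convex_Icc 0 1) ?_ ?_ ?_
    · apply Continuous.continuousOn
      fun_prop
    · exact fun x hx => (hder x hx).differentiableAt.differentiableWithinAt
    · intro x hx
      rw [(hder x hx).deriv]
      rw [interior_Icc] at hx
      obtain ⟨hx0, hx1⟩ := hx
      have hp : 0 < 1 - x ^ 2 := by nlinarith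
      have hxs : x / s ≤ x := div_le_self hx0.le hs.le
      have hxs0 : 0 < x / s := by positivity
      have hle : √(1 - x ^ 2) ≤ √(1 - (x / s) ^ 2) := Real.sqrt_le_sqrt (by nlinarith)
      have hinv := one_div_le_one_div_of_le (Real.sqrt_pos.2 hp) hle
      have hs1 : 1 / s ≤ 1 := (div_le_one hs0).2 hs.le
      have hnn : 0 ≤ 1 / √(1 - (x / s) ^ 2) := by positivity
      have hmul := mul_le_of_le_one_right hnn hs1
      nlinarith
  have h := hanti ⟨hr0, hr1⟩ ⟨zero_le_one, le_rfl⟩ hr1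
  have hphi1 : phi 1 = 0 := by simp [phi]
  simp only [H, hphi1, Real.arccos_one] at h
  linarith

/-- Curvature gap estimate in the case `ε = 0`: if the leaf of parameter `s`
passes through `(z, φ(|z|) - τ)` with `|z| = r`, then `s ≥ 1 + τ²/16`, hence
`1 - 1/s ≥ τ²/20`. -/
theorem curvature_gap_eps_zero (r τ s : ℝ)
    (hr0 : 0 ≤ r) (hr1 : r < 1)
    (hτ0 : 0 < τ) (hτ1 : τ < phi r)
    (hs : 1 < s)
    (heq : s ^ 2 * (phi (r / s) - phi (1 / s)) = phi r - τ) :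
    1 + τ ^ 2 / 16 ≤ s ∧ τ ^ 2 / 20 ≤ 1 - 1 / s := by
  have hs0 : 0 < s := by linarith
  have hτ2 : τ < 2 := by
    have := phi_le hr0 hr1.le
    linarith [Real.pi_lt_four]
  have hmain : 1 + τ ^ 2 / 16 ≤ s := by
    rcases le_or_gt s 3 with h3 | h3
    · have h1 := tau_aux hr0 hr1.le hs
      have h2 : Real.arccos r ≤ Real.arccos (r / s) :=
        Real.arccos_le_arccos (div_le_self hr0 hs.le)
      have h4 := arccos_one_div_le hs
      have h5 : τ ≤ 2 * √(s ^ 2 - 1) := by linarith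
      have h6 := Real.sq_sqrt (show 0 ≤ s ^ 2 - 1 by nlinarith)
      have h7 : τ ^ 2 ≤ (2 * √(s ^ 2 - 1)) ^ 2 := pow_le_pow_left₀ hτ0.le h5 2
      nlinarith
    · nlinarith
  refine ⟨hmain, ?_⟩
  have hsq : τ ^ 2 ≤ 4 := by nlinarith
  have e : 1 - 1 / s = (s - 1) / s := by field_simp
  rw [e, le_div_iff₀ hs0]
  -- The slope `1 - τ²/20` in `s` is positive, so it suffices to test `s = 1 + τ²/16`.
  nlinarith [mul_nonneg (sub_nonneg.2 hmain) (show 0 ≤ 1 - τ ^ 2 / 20 by linarith),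
    mul_nonneg (sq_nonneg τ) (sub_nonneg.2 hsq)]
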